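/- arXiv:quant-ph/0310133 — 7 statements merged into one kernel-verified Lean document; each statement's English description precedes it below -/
import Mathlib

section
/- Let N be an odd composite natural number and let m be the number of distinct prime factors of N. Let S be the set of units s ∈ (ℤ/Nℤ)ˣ such that either the multiplicative order ord(s) of s is odd, or s^(ord(s)/2) = −1 in (ℤ/Nℤ)ˣ. Then 2^(m−1)·|S| ≤ φ(N), i.e. |S| ≤ φ(N)/2^(m−1). -/
/-!
Write `G = (ZMod N)ˣ`, let `S ⊆ G` be the set in question, and fix a prime `q ∣ N`.

If `s ∈ S` then for every prime `p ∣ N` the order of `s mod p` has the same 2-adic valuation as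
the order of `s` (`padicValNat_orderOf_unitsMap`). On the other hand, Euler's criterion shows that
the quadratic character `x ^ (p / 2)` of a unit mod `p` depends only on the 2-adic valuation of its
order (`pow_half_eq_of_padicValNat_eq`). Hence two elements of `S` which agree mod `q` have the same
quadratic character modulo every prime divisor of `N`.

For each set `T` of prime divisors of `N` other than `q`, the Chinese remainder theorem provides a
unit `u T` that is `1` mod `q`, a nonresidue modulo the primes in `T`, and `1` modulo the others.
The map `(T, s) ↦ u T * s` is injective on pairs with `s ∈ S`: the product determines `s mod q`,
hence all the quadratic characters of `s`, hence those of `u T`, hence `T`, and finally `s`.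
As there are `2 ^ (m - 1)` sets `T`, this gives the bound.
-/

/-- If `d` divides `n` but not `n / 2`, with `n` even, then `d` absorbs the full power of `2`
in `n`. -/
lemma padicValNat_eq_of_dvd_of_not_dvd_half {d n : ℕ} (hn : n ≠ 0) (he : Even n) (hd : d ∣ n)
    (hd2 : ¬ d ∣ n / 2) : padicValNat 2 d = padicValNat 2 n := by
  obtain ⟨k, rfl⟩ := hd
  have hd0 : d ≠ 0 := left_ne_zero_of_mul hn
  have hk0 : k ≠ 0 := right_ne_zero_of_mul hn
  have hk : ¬ 2 ∣ k := by
    rintro ⟨j, rfl⟩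
    apply hd2
    have : d * (2 * j) / 2 = d * j := by
      rw [show d * (2 * j) = 2 * (d * j) by ring]
      exact Nat.mul_div_cancel_left _ (by norm_num)
    rw [this]
    exact dvd_mul_right _ _
  rw [padicValNat.mul hd0 hk0, padicValNat.eq_zero_of_not_dvd hk, add_zero]

lemma padicValNat_lt_of_dvd_half {d n : ℕ} (hn : n ≠ 0) (he : Even n) (hd2 : d ∣ n / 2) :
    padicValNat 2 d < padicValNat 2 n := by
  obtain ⟨k, rfl⟩ := he.two_dvd
  have hk0 : k ≠ 0 := right_ne_zero_of_mul hn
  rw [Nat.mul_div_cancel_left _ (by norm_num)] at hd2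
  have h1 : padicValNat 2 d ≤ padicValNat 2 k :=
    (padicValNat_dvd_iff_le hk0).1 (pow_padicValNat_dvd.trans hd2)
  rw [padicValNat.mul (by norm_num) hk0, padicValNat.self (by norm_num)]
  omega

/-- The quadratic character modulo an odd prime depends only on the 2-adic valuation of the
order. -/
lemma pow_half_eq_of_padicValNat_eq {p : ℕ} [Fact p.Prime] (hp : Odd p) {x y : (ZMod p)ˣ}
    (h : padicValNat 2 (orderOf x) = padicValNat 2 (orderOf y)) :
    x ^ (p / 2) = y ^ (p / 2) := by
  have hp2 := (Fact.out : p.Prime).two_le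
  have hhalf : p / 2 = (p - 1) / 2 := by
    obtain ⟨k, rfl⟩ := hp
    omega
  have hn : p - 1 ≠ 0 := by omega
  have he : Even (p - 1) := by
    obtain ⟨k, rfl⟩ := hp
    exact ⟨k, by omega⟩
  have key : ∀ z : (ZMod p)ˣ,
      z ^ (p / 2) = 1 ↔ padicValNat 2 (orderOf z) ≠ padicValNat 2 (p - 1) := by
    intro z
    rw [← orderOf_dvd_iff_pow_eq_one, hhalf]
    have hz : orderOf z ∣ p - 1 := orderOf_dvd_of_pow_eq_one (ZMod.units_pow_card_sub_one_eq_one p z)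
    constructor
    · intro hd
      exact (padicValNat_lt_of_dvd_half hn he hd).ne
    · intro hne
      by_contra hd
      exact hne (padicValNat_eq_of_dvd_of_not_dvd_half hn he hz hd)
  have pm : ∀ z : (ZMod p)ˣ, z ^ (p / 2) = 1 ∨ z ^ (p / 2) = -1 := by
    intro z
    rcases ZMod.pow_div_two_eq_neg_one_or_one p z.ne_zero with h | h
    · left; ext; simpa using h
    · right; ext; simpa using h
  have hxy : x ^ (p / 2) = 1 ↔ y ^ (p / 2) = 1 := by rw [key, key, h]
  rcases pm x with hx | hx <;> rcases pm y with hy | hy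
  · rw [hx, hy]
  · rw [hx, hxy.1 hx]
  · rw [hy, hxy.2 hy]
  · rw [hx, hy]

lemma padicValNat_orderOf_unitsMap {N p : ℕ} [NeZero N] [Fact p.Prime] (hp : Odd p) (hpN : p ∣ N)
    {s : (ZMod N)ˣ} (hs : Odd (orderOf s) ∨ s ^ (orderOf s / 2) = -1) :
    padicValNat 2 (orderOf (ZMod.unitsMap hpN s)) = padicValNat 2 (orderOf s) := by
  have hdvd : orderOf (ZMod.unitsMap hpN s) ∣ orderOf s := orderOf_map_dvd _ _
  by_cases ho : Odd (orderOf s)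
  · rw [padicValNat.eq_zero_of_not_dvd ho.not_two_dvd_nat,
      padicValNat.eq_zero_of_not_dvd (ho.of_dvd_nat hdvd).not_two_dvd_nat]
  · have hs' := hs.resolve_left ho
    refine padicValNat_eq_of_dvd_of_not_dvd_half (orderOf_pos s).ne' (Nat.not_odd_iff_even.1 ho)
      hdvd ?_
    rw [orderOf_dvd_iff_pow_eq_one, ← map_pow, hs']
    intro h
    have h1 : (-1 : ZMod p) = 1 := by
      have := congrArg Units.val h
      simpa [ZMod.unitsMap] using this
    have : Fact (2 < p) := ⟨by
      have := (Fact.out : p.Prime).two_le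
      obtain ⟨k, rfl⟩ := hp
      omega⟩
    exact ZMod.neg_one_ne_one h1

lemma exists_unit_pow_half_ne_one {p : ℕ} [Fact p.Prime] (hp : Odd p) :
    ∃ g : (ZMod p)ˣ, g ^ (p / 2) ≠ 1 := by
  have hc : ringChar (ZMod p) ≠ 2 := by
    rw [ZMod.ringChar_zmod_n]
    rintro rfl
    exact absurd hp (by decide)
  obtain ⟨a, ha⟩ := FiniteField.exists_nonsquare hc
  have ha0 : a ≠ 0 := by
    rintro rfl
    exact ha ⟨0, by simp⟩
  refine ⟨Units.mk0 a ha0, fun h => ha ((ZMod.euler_criterion p ha0).2 ?_)⟩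
  have := congrArg Units.val h
  simpa using this

/-- For every set `T` of primes there is a unit mod `N` that is a nonresidue modulo the prime
divisors of `N` in `T` and is `1` modulo the other prime divisors. -/
lemma exists_unit_of_residues {N : ℕ} (hNodd : Odd N) (T : Finset ℕ) :
    ∃ u : (ZMod N)ˣ, ∀ p, p.Prime → ∀ h : p ∣ N,
      (p ∈ T → ZMod.unitsMap h u ^ (p / 2) ≠ 1) ∧ (p ∉ T → ZMod.unitsMap h u = 1) := by
  have hN0 : N ≠ 0 := by
    rintro rfl
    exact absurd hNodd (by decide)
  -- prescribed residues modulo each prime divisor, as natural numbers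
  have hres : ∀ p, ∃ a : ℕ, p.Prime → p ∣ N →
      (a : ZMod p) ≠ 0 ∧ (p ∈ T → (a : ZMod p) ^ (p / 2) ≠ 1) ∧ (p ∉ T → (a : ZMod p) = 1) := by
    intro p
    by_cases hp : p.Prime
    swap
    · exact ⟨0, fun h => absurd h hp⟩
    by_cases hpN : p ∣ N
    swap
    · exact ⟨0, fun _ h => absurd h hpN⟩
    haveI := Fact.mk hp
    by_cases hT : p ∈ T
    · obtain ⟨g, hg⟩ := exists_unit_pow_half_ne_one (hNodd.of_dvd_nat hpN)
      refine ⟨(g : ZMod p).val, fun _ _ => ?_⟩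
      rw [ZMod.natCast_zmod_val]
      refine ⟨g.ne_zero, fun _ h => hg ?_, fun h => absurd hT h⟩
      ext
      simpa using h
    · exact ⟨1, fun _ _ => ⟨by simp, fun h => absurd h hT, fun _ => by simp⟩⟩
  choose a ha using hres
  obtain ⟨k, hk⟩ := Nat.chineseRemainderOfFinset a id N.primeFactors
    (fun p hp => (Nat.prime_of_mem_primeFactors hp).ne_zero)
    (fun p hp q hq hpq => (Nat.coprime_primes (Nat.prime_of_mem_primeFactors hp)
      (Nat.prime_of_mem_primeFactors hq)).2 hpq)
  have hka : ∀ p, p.Prime → p ∣ N → (k : ZMod p) = a p := fun p hp hpN =>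
    (ZMod.natCast_eq_natCast_iff _ _ _).2 (hk p (Nat.mem_primeFactors.2 ⟨hp, hpN, hN0⟩))
  have hcop : k.Coprime N := by
    refine Nat.coprime_of_dvd fun p hp hpk hpN => ?_
    apply (ha p hp hpN).1
    rw [← hka p hp hpN]
    exact (ZMod.natCast_eq_zero_iff _ _).2 hpk
  refine ⟨ZMod.unitOfCoprime k hcop, fun p hp hpN => ?_⟩
  have hval : ((ZMod.unitsMap hpN (ZMod.unitOfCoprime k hcop) : (ZMod p)ˣ) : ZMod p) = a p := by
    rw [← hka p hp hpN]
    simp [ZMod.unitsMap]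
  refine ⟨fun hT h => (ha p hp hpN).2.1 hT ?_, fun hT => ?_⟩
  · rw [← hval, ← Units.val_pow_eq_pow_val, h, Units.val_one]
  · ext
    rw [hval, (ha p hp hpN).2.2 hT, Units.val_one]

/-- Let `N` be an odd composite natural number with `m` distinct prime factors, and let
`S` be the set of units `s` of `ℤ/Nℤ` whose multiplicative order is odd or which satisfy
`s ^ (ord s / 2) = -1`. Then `2^(m-1) * |S| ≤ φ(N)`. -/
theorem order_condition_card_le_totient (N : ℕ) (hNodd : Odd N) (hN : 1 < N)
    (hNnotprime : ¬ N.Prime) :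
    2 ^ (N.primeFactors.card - 1) *
      {s : (ZMod N)ˣ | Odd (orderOf s) ∨ s ^ (orderOf s / 2) = -1}.ncard
      ≤ N.totient := by
  classical
  haveI : NeZero N := ⟨by omega⟩
  obtain ⟨q, hq, hqN⟩ := Nat.exists_prime_and_dvd hN.ne'
  have hqmem : q ∈ N.primeFactors := Nat.mem_primeFactors.2 ⟨hq, hqN, by omega⟩
  choose u hu using fun T => exists_unit_of_residues hNodd T
  rw [← ZMod.card_units_eq_totient, Set.ncard_eq_toFinset_card', ← Finset.card_erase_of_mem hqmem,
    ← Finset.card_powerset, ← Finset.card_product, ← Finset.card_univ]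
  refine Finset.card_le_card_of_injOn (fun x => u x.1 * x.2) (fun _ _ => Finset.mem_univ _) ?_
  rintro ⟨T, s⟩ hTs ⟨T', s'⟩ hTs' heq
  simp only [Finset.coe_product, Set.mem_prod, Finset.mem_coe, Finset.mem_powerset,
    Set.mem_toFinset, Set.mem_setOf_eq] at hTs hTs' heq
  obtain ⟨hT, hs⟩ := hTs
  obtain ⟨hT', hs'⟩ := hTs'
  have hmap : ∀ p (h : p ∣ N), ZMod.unitsMap h (u T) * ZMod.unitsMap h s =
      ZMod.unitsMap h (u T') * ZMod.unitsMap h s' := fun p h => by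
    rw [← map_mul, ← map_mul, heq]
  have hsq : ZMod.unitsMap hqN s = ZMod.unitsMap hqN s' := by
    have := hmap q hqN
    rwa [(hu T q hq hqN).2 fun h => Finset.notMem_erase _ _ (hT h),
      (hu T' q hq hqN).2 fun h => Finset.notMem_erase _ _ (hT' h), one_mul, one_mul] at this
  have hval : padicValNat 2 (orderOf s) = padicValNat 2 (orderOf s') := by
    haveI := Fact.mk hq
    rw [← padicValNat_orderOf_unitsMap (hNodd.of_dvd_nat hqN) hqN hs,
      ← padicValNat_orderOf_unitsMap (hNodd.of_dvd_nat hqN) hqN hs', hsq]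
  have hchar : ∀ p, p.Prime → ∀ h : p ∣ N,
      ZMod.unitsMap h (u T) ^ (p / 2) = ZMod.unitsMap h (u T') ^ (p / 2) := by
    intro p hp h
    haveI := Fact.mk hp
    have hpo := hNodd.of_dvd_nat h
    have h1 := congrArg (· ^ (p / 2)) (hmap p h)
    have h2 : ZMod.unitsMap h s ^ (p / 2) = ZMod.unitsMap h s' ^ (p / 2) :=
      pow_half_eq_of_padicValNat_eq hpo (by
        rw [padicValNat_orderOf_unitsMap hpo h hs, padicValNat_orderOf_unitsMap hpo h hs', hval])
    simp only [mul_pow, h2] at h1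
    exact mul_right_cancel h1
  have hTT : T = T' := by
    ext p
    constructor
    · intro hpT
      have hpm := Finset.mem_of_mem_erase (hT hpT)
      have hp := Nat.prime_of_mem_primeFactors hpm
      have hpN := Nat.dvd_of_mem_primeFactors hpm
      by_contra hpT'
      apply (hu T p hp hpN).1 hpT
      rw [hchar p hp hpN, (hu T' p hp hpN).2 hpT', one_pow]
    · intro hpT'
      have hpm := Finset.mem_of_mem_erase (hT' hpT')
      have hp := Nat.prime_of_mem_primeFactors hpm
      have hpN := Nat.dvd_of_mem_primeFactors hpm
      by_contra hpT
      apply (hu T' p hp hpN).1 hpT'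
      rw [← hchar p hp hpN, (hu T p hp hpN).2 hpT, one_pow]
  subst hTT
  exact Prod.ext rfl (mul_left_cancel heq)
end

section
/- Let n and r be positive integers with r dividing n, and let f : ℕ → ℂ satisfy f(x + r) = f(x) for all x ∈ ℕ. Define the quantum Fourier transform coefficients f̂(c) = (1/√n)·Σ_{k=0}^{n-1} f(k)·exp(−2πi·c·k/n) for integers c with 0 ≤ c < n. Then: if (n/r) divides c, f̂(c) = (√n/r)·Σ_{s=0}^{r-1} f(s)·exp(−2πi·c·s/n); and if (n/r) does not divide c, f̂(c) = 0. -/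
/-!
Write `n = r * m`. Shifting `k` by `r` multiplies the summand `f k * exp (-2πi c k / n)` by the
constant `w = exp (-2πi c / m)`, so cutting `{0, …, n - 1}` into `m` blocks of length `r` factors
the sum as `(∑_{j < m} w ^ j)` times the sum over the first block
(`sum_range_mul_of_quasiperiodic`). As `exp (2πi / m)` is a primitive `m`-th root of unity,
`w = 1` exactly when `m ∣ c`; the geometric sum is then `m`, and otherwise it vanishes since
`w ^ m = 1`. In the first case the prefactor is `m / √n = √n / r`.
-/

theorem sum_range_mul_of_quasiperiodic (r : ℕ) (w : ℂ) (g : ℕ → ℂ)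
    (hg : ∀ k, g (k + r) = w * g k) (m : ℕ) :
    ∑ k ∈ Finset.range (r * m), g k =
      (∑ j ∈ Finset.range m, w ^ j) * ∑ s ∈ Finset.range r, g s := by
  have hshift : ∀ j s, g (r * j + s) = w ^ j * g s := by
    intro j s
    induction j with
    | zero => simp
    | succ j ih =>
      rw [show r * (j + 1) + s = r * j + s + r by ring, hg, ih]
      ring
  induction m with
  | zero => simp
  | succ m ih =>
    rw [Nat.mul_succ, Finset.sum_range_add, ih, Finset.sum_range_succ, add_mul]
    simp only [hshift, Finset.mul_sum]

/-- The quantum Fourier transform identifies periods: if `f : ℕ → ℂ` is periodic with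
period `r` and `r ∣ n`, then the Fourier coefficient `f̂(c)` vanishes unless `(n/r) ∣ c`,
in which case `f̂(c) = (√n / r) · Σ_{s=0}^{r-1} f(s)·exp(−2πi·c·s/n)`. -/
theorem qft_periodic (n r : ℕ) (hn : 0 < n) (hr : 0 < r) (hdvd : r ∣ n)
    (f : ℕ → ℂ) (hf : ∀ x : ℕ, f (x + r) = f x) (c : ℕ) (hc : c < n) :
    ((n / r ∣ c →
      ((1 / Real.sqrt n : ℝ) : ℂ) *
          ∑ k ∈ Finset.range n, f k * Complex.exp (-(2 * Real.pi * Complex.I * c * k / n)) =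
        ((Real.sqrt n / r : ℝ) : ℂ) *
          ∑ s ∈ Finset.range r, f s * Complex.exp (-(2 * Real.pi * Complex.I * c * s / n)))) ∧
    (¬ (n / r ∣ c) →
      ((1 / Real.sqrt n : ℝ) : ℂ) *
          ∑ k ∈ Finset.range n, f k * Complex.exp (-(2 * Real.pi * Complex.I * c * k / n)) = 0) := by
  obtain ⟨m, rfl⟩ := hdvd
  have hm : 0 < m := Nat.pos_of_mul_pos_left hn
  have hm0 : (m : ℂ) ≠ 0 := by exact_mod_cast hm.ne'
  have hr0 : (r : ℂ) ≠ 0 := by exact_mod_cast hr.ne'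
  rw [Nat.mul_div_cancel_left m hr]
  have hζ := Complex.isPrimitiveRoot_exp m hm.ne'
  set ζ := Complex.exp (2 * Real.pi * Complex.I / m) with hζ_def
  have hstep : Complex.exp (-(2 * Real.pi * Complex.I * c * r / (r * m : ℕ))) = (ζ ^ c)⁻¹ := by
    rw [hζ_def, ← Complex.exp_nat_mul, ← Complex.exp_neg]
    congr 1
    push_cast
    field_simp
  have hsum := sum_range_mul_of_quasiperiodic r ((ζ ^ c)⁻¹)
    (fun k => f k * Complex.exp (-(2 * Real.pi * Complex.I * c * k / (r * m : ℕ))))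
    (fun k => by
      rw [hf, ← hstep, mul_left_comm, ← Complex.exp_add]
      congr 2
      push_cast
      ring) m
  rw [hsum]
  constructor
  · intro hmc
    rw [(hζ.pow_eq_one_iff_dvd c).2 hmc]
    simp only [inv_one, one_pow, Finset.sum_const, Finset.card_range, nsmul_eq_mul, mul_one]
    rw [← mul_assoc]
    congr 1
    have hsq : Real.sqrt (r * m : ℕ) * Real.sqrt (r * m : ℕ) = r * m := by
      rw [Real.mul_self_sqrt (Nat.cast_nonneg _)]
      push_cast
      rfl
    have hpos : 0 < Real.sqrt (r * m : ℕ) := Real.sqrt_pos.2 (by exact_mod_cast hn)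
    have hrR : (r : ℝ) ≠ 0 := by exact_mod_cast hr.ne'
    have hreal : 1 / Real.sqrt (r * m : ℕ) * m = Real.sqrt (r * m : ℕ) / r := by
      rw [one_div_mul_eq_div, div_eq_div_iff hpos.ne' hrR, hsq, mul_comm]
    exact_mod_cast hreal
  · intro hmc
    have hne : (ζ ^ c)⁻¹ ≠ 1 := fun h =>
      hmc ((hζ.pow_eq_one_iff_dvd c).1 (inv_eq_one.1 h))
    have hpow : ((ζ ^ c)⁻¹) ^ m = 1 := by
      rw [inv_pow, pow_right_comm, hζ.pow_eq_one, one_pow, inv_one]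
    rw [geom_sum_eq hne, hpow, sub_self, zero_div, zero_mul, mul_zero]
end

section
/- Let x be a rational number, p an integer and r a positive natural number with gcd(p, r) = 1. If |p/r − x| < 1/(2r²), then p/r is a convergent of the continued fraction expansion of x; that is, there exists a natural number n such that the n-th convergent of the canonical continued fraction expansion of x equals p/r. -/
/-!
This is Legendre's theorem, which Mathlib proves for real numbers
(`Real.exists_convs_eq_rat`). It descends to `ℚ` because the floor, the fractional part and the
inverse commute with the embedding `ℚ → ℝ`, so the convergents of a rational number are the same
whether computed in `ℚ` or in `ℝ` (`cast_convs_rat`).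
-/

/-- The convergents of a rational number do not depend on whether its continued fraction is
expanded in `ℚ` or in `ℝ`. -/
theorem cast_convs_rat (x : ℚ) (n : ℕ) :
    (((GenContFract.of x).convs n : ℚ) : ℝ) = (GenContFract.of (x : ℝ)).convs n := by
  induction n generalizing x with
  | zero => simp
  | succ n ih =>
    rw [GenContFract.convs_succ, GenContFract.convs_succ]
    push_cast
    rw [ih, Rat.floor_cast]
    push_cast
    rfl

/-- If a rational `p/r` (in lowest terms) approximates `x` to within `1/(2r²)`, then
`p/r` is a convergent of the continued fraction expansion of `x`. -/
theorem convergent_of_close (x : ℚ) (p : ℤ) (r : ℕ) (hr : 0 < r)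
    (hcop : Int.gcd p (r : ℤ) = 1)
    (h : |(p : ℚ) / (r : ℚ) - x| < 1 / (2 * (r : ℚ) ^ 2)) :
    ∃ n : ℕ, (GenContFract.of x).convs n = (p : ℚ) / (r : ℚ) := by
  have hden : ((p : ℚ) / (r : ℚ)).den = r := by
    have := Rat.den_div_eq_of_coprime (a := p) (b := r) (by exact_mod_cast hr)
      (by simpa [Int.gcd, Nat.Coprime] using hcop)
    exact_mod_cast this
  have hreal : |(x : ℝ) - (((p : ℚ) / (r : ℚ) : ℚ) : ℝ)| <
      1 / (2 * (((p : ℚ) / (r : ℚ)).den : ℝ) ^ 2) := by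
    rw [hden, abs_sub_comm]
    have h' := (Rat.cast_lt (K := ℝ)).mpr h
    push_cast at h' ⊢
    exact h'
  obtain ⟨n, hn⟩ := Real.exists_convs_eq_rat hreal
  rw [← cast_convs_rat] at hn
  exact ⟨n, Rat.cast_injective hn⟩
end

section
/- Let r, q be integers with 0 < r ≤ q, and for each integer s let c_s denote the unique integer with −r/2 ≤ c_s·r − s·q < r/2. Then for every s with 0 ≤ s < r we have 0 ≤ c_s < q, and the map s ↦ c_s is injective on {0, 1, …, r−1}: if c_s = c_t with 0 ≤ s, t < r then s = t. -/
/-!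
The residuals `c s * r - s * q` lie in an interval of length `r`, half-open and centred at `0`.
A value `c s ≤ -1` makes the residual at most `-r`, and `c s ≥ q` makes it at least
`(r - s) * q ≥ q ≥ r`; both are out of range. If `c s = c t` with `s ≠ t`, the two residuals
differ by a nonzero multiple of `q ≥ r`, which does not fit in the interval.
-/

/-- For `0 < r ≤ q` and `c_s` the unique integer with `−r/2 ≤ c_s·r − s·q < r/2`,
the integers `c_0, …, c_{r-1}` are distinct and lie in `[0, q)`. -/
theorem good_c_injective (r q : ℤ) (hr : 0 < r) (hrq : r ≤ q)
    (c : ℤ → ℤ)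
    (hc : ∀ s : ℤ, 0 ≤ s → s < r →
      -r ≤ 2 * (c s * r - s * q) ∧ 2 * (c s * r - s * q) < r) :
    (∀ s : ℤ, 0 ≤ s → s < r → 0 ≤ c s ∧ c s < q) ∧
    (∀ s t : ℤ, 0 ≤ s → s < r → 0 ≤ t → t < r → c s = c t → s = t) := by
  have hq : 0 < q := hr.trans_le hrq
  -- If `c s = c t` with `s < t`, the two residuals differ by `(t - s) * q ≥ q ≥ r`,
  -- but both lie in a half-open interval of length `r`.
  have hnot : ∀ s t : ℤ, 0 ≤ s → s < r → 0 ≤ t → t < r → c s = c t → ¬ s < t := by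
    intro s t hs hsr ht htr hst hlt
    have h1 := (hc s hs hsr).2
    have h2 := (hc t ht htr).1
    rw [hst] at h1
    have h3 : 0 ≤ (t - s - 1) * q := mul_nonneg (by omega) hq.le
    linarith
  refine ⟨fun s hs hsr => ?_, fun s t hs hsr ht htr hst => ?_⟩
  · obtain ⟨h1, h2⟩ := hc s hs hsr
    constructor
    · by_contra! hneg
      have h3 : 0 ≤ (-1 - c s) * r := mul_nonneg (by omega) hr.le
      have h4 : 0 ≤ s * q := mul_nonneg hs hq.le
      linarith
    · by_contra! hge
      -- Here the residual is at least `(r - s) * q ≥ q ≥ r`.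
      have h3 : 0 ≤ (c s - q) * r := mul_nonneg (by omega) hr.le
      have h4 : 0 ≤ (r - s - 1) * q := mul_nonneg (by omega) hq.le
      linarith
  · exact le_antisymm (not_lt.mp (hnot t s ht htr hs hsr hst.symm))
      (not_lt.mp (hnot s t hs hsr ht htr hst))
end

section
/- Let N, q, r, s, a, b, c be integers with 0 < r < N, 0 < b < N and N² ≤ q. If |s/r − c/q| ≤ 1/(2q) and |a/b − c/q| ≤ 1/(2q) (as real numbers), then s·b = a·r, i.e. s/r = a/b as rational numbers. -/
/-- Uniqueness of the convergent: if `s/r` and `a/b` (with `0 < r < N`, `0 < b < N`,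
`N² ≤ q`) both approximate `c/q` to within `1/(2q)`, then `s/r = a/b`. -/
theorem convergent_unique (N q r s a b c : ℤ)
    (hr0 : 0 < r) (hrN : r < N) (hb0 : 0 < b) (hbN : b < N) (hq : N ^ 2 ≤ q)
    (h1 : |(s : ℝ) / (r : ℝ) - (c : ℝ) / (q : ℝ)| ≤ 1 / (2 * (q : ℝ)))
    (h2 : |(a : ℝ) / (b : ℝ) - (c : ℝ) / (q : ℝ)| ≤ 1 / (2 * (q : ℝ))) :
    s * b = a * r := by
  -- By the triangle inequality `|s * b - a * r| / (r * b) ≤ 1 / q`, while `r * b < N ^ 2 ≤ q`;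
  -- so the integer `s * b - a * r` has absolute value less than `1`.
  have hrb : r * b < q := by nlinarith
  have hr : (0 : ℝ) < r := by exact_mod_cast hr0
  have hb : (0 : ℝ) < b := by exact_mod_cast hb0
  have hrbR : (r : ℝ) * b < q := by exact_mod_cast hrb
  have hqR : (0 : ℝ) < q := (mul_pos hr hb).trans hrbR
  have hdist : |(s : ℝ) / r - a / b| ≤ 1 / q := by
    have htri := abs_sub_le ((s : ℝ) / r) (c / q) (a / b)
    rw [abs_sub_comm ((c : ℝ) / q)] at htri
    have hhalf : 1 / (2 * (q : ℝ)) + 1 / (2 * q) = 1 / q := by field_simp; norm_num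
    linarith
  rw [div_sub_div _ _ hr.ne' hb.ne', abs_div, abs_of_pos (mul_pos hr hb),
    div_le_div_iff₀ (mul_pos hr hb) hqR, one_mul] at hdist
  have hlt : |(s : ℝ) * b - r * a| < 1 := by
    by_contra! hge
    nlinarith
  have hltZ : |s * b - r * a| < 1 := by exact_mod_cast hlt
  linarith [Int.abs_lt_one_iff.mp hltZ, mul_comm r a]
end

section
/- For every natural number r ≥ 19, φ(r)/r > 1/(4·log(log r)), where φ is Euler's totient function and log is the natural logarithm; the inequality is between real numbers. -/
/-!
Write `L = log r` and take logarithms: `log (r / φ(r)) = ∑_{p ∣ r} -log (1 - 1/p)`. Every prime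
`p > N` contributes at most `1/N ≤ log p / (N log (N+1))`, and every prime `p ≤ N` contributes at
least `log p / (N log (N+1))`, so `∑_{p ∣ r} log p ≤ L` gives, for every `N ≥ 2`,

  `log (r / φ(r)) ≤ ∑_{p ≤ N} -log (1 - 1/p) + (L - θ(N)) / (N log (N+1))`

(`log_ratio_le`). For `L ≤ 64` the choices `N = 10` and `N = 28` suffice, by numerical estimates
on a few ranges of `L`. For `L ≥ 64` take `N = ⌊L⌋`. The required explicit form of Mertens' upper
bound `∏_{p ≤ N} (1 - 1/p)⁻¹ ≤ C log N` comes from the bound `∑_{p ≤ N} log p / p ≤ log N + 0.47`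
for `N ≥ 64` (`mertensSum_le`, a consequence of `∏_{p ≤ N} p ^ ⌊N/p⌋ ∣ N!` and
`θ(N) ≤ N log 4`) by a summation by parts started at `N = 64` (`logEulerProd_induction`).
-/

namespace TotientRatio

open Real Finset

/-- The logarithm of the Euler product `∏_{p ≤ n} (1 - 1/p)⁻¹`. -/
noncomputable def logEulerProd (n : ℕ) : ℝ := ∑ p ∈ n.primesLE, -log (1 - (p : ℝ)⁻¹)

/-- The sum `∑_{p ≤ n} log p / p` of Mertens' first theorem. -/
noncomputable def mertensSum (n : ℕ) : ℝ := ∑ p ∈ n.primesLE, log p / p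

/-! ### Reduction to Euler products -/

lemma local_le {p : ℕ} (hp : 2 ≤ p) : -log (1 - (p : ℝ)⁻¹) ≤ 1 / ((p : ℝ) - 1) := by
  have h2 : (2 : ℝ) ≤ p := by exact_mod_cast hp
  have hpos : 0 < 1 - (p : ℝ)⁻¹ := by
    have : (p : ℝ)⁻¹ < 1 := inv_lt_one_of_one_lt₀ (by linarith)
    linarith
  have h := one_sub_inv_le_log_of_pos hpos
  have e : 1 - (1 - (p : ℝ)⁻¹)⁻¹ = -(1 / ((p : ℝ) - 1)) := by
    have h1 : (p : ℝ) - 1 ≠ 0 := by linarith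
    have : (1 - (p : ℝ)⁻¹) = ((p : ℝ) - 1) / p := by field_simp
    rw [this]
    field_simp
    ring
  linarith

lemma le_local {p : ℕ} (hp : 2 ≤ p) : 1 / (p : ℝ) ≤ -log (1 - (p : ℝ)⁻¹) := by
  have h2 : (2 : ℝ) ≤ p := by exact_mod_cast hp
  have hpos : 0 < 1 - (p : ℝ)⁻¹ := by
    have : (p : ℝ)⁻¹ < 1 := inv_lt_one_of_one_lt₀ (by linarith)
    linarith
  have h := log_le_sub_one_of_pos hpos
  rw [one_div]
  linarith

lemma log_ratio_eq {r : ℕ} (hr : 0 < r) :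
    log ((r : ℝ) / r.totient) = ∑ p ∈ r.primeFactors, -log (1 - (p : ℝ)⁻¹) := by
  have h : (r.totient : ℝ) = r * ∏ p ∈ r.primeFactors, (1 - (p : ℝ)⁻¹) := by
    have := congrArg (fun q : ℚ => (q : ℝ)) (Nat.totient_eq_mul_prod_factors r)
    push_cast at this
    exact this
  have hr' : (0 : ℝ) < r := by exact_mod_cast hr
  have hne : ∀ p ∈ r.primeFactors, (1 - (p : ℝ)⁻¹) ≠ 0 := by
    intro p hp
    have h2 : (2 : ℝ) ≤ p := by exact_mod_cast (Nat.prime_of_mem_primeFactors hp).two_le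
    have : (p : ℝ)⁻¹ < 1 := inv_lt_one_of_one_lt₀ (by linarith)
    linarith
  have hφ : (r.totient : ℝ) ≠ 0 := by exact_mod_cast (Nat.totient_pos.2 hr).ne'
  rw [log_div hr'.ne' hφ, h, log_mul hr'.ne' (prod_ne_zero_iff.2 hne), log_prod hne,
    sum_neg_distrib]
  ring

/-- The term `-log (1 - 1/p)` is compared with `log p / (N log (N+1))`, from above for `p > N`
and from below for `p ≤ N`. -/
lemma log_ratio_le {r N : ℕ} (hr : 0 < r) (hN : 2 ≤ N) :
    log ((r : ℝ) / r.totient) ≤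
      logEulerProd N + (log r - ∑ p ∈ N.primesLE, log p) / (N * log (N + 1)) := by
  have hN' : (2 : ℝ) ≤ N := by exact_mod_cast hN
  have hl : 0 < log ((N : ℝ) + 1) := log_pos (by linarith)
  set lam : ℝ := 1 / (N * log (N + 1)) with hlam
  have hlam0 : 0 < lam := by positivity
  have hlamN : lam * log (N + 1) = 1 / N := by rw [hlam]; field_simp
  have hbig : ∀ p : ℕ, N + 1 ≤ p → -log (1 - (p : ℝ)⁻¹) - lam * log p ≤ 0 := by
    intro p hp
    have hp' : (N : ℝ) + 1 ≤ p := by exact_mod_cast hp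
    have h1 := local_le (p := p) (by omega)
    have h2 : 1 / ((p : ℝ) - 1) ≤ 1 / N := one_div_le_one_div_of_le (by linarith) (by linarith)
    have h3 : lam * log (N + 1) ≤ lam * log p :=
      mul_le_mul_of_nonneg_left (log_le_log (by linarith) hp') hlam0.le
    linarith
  have hsmall : ∀ p ∈ N.primesLE, 0 ≤ -log (1 - (p : ℝ)⁻¹) - lam * log p := by
    intro p hp
    have hp2 := Nat.two_le_of_mem_primesLE hp
    have hp0 : (2 : ℝ) ≤ p := by exact_mod_cast hp2
    have hp' : (p : ℝ) ≤ N := by exact_mod_cast Nat.le_of_mem_primesLE hp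
    have h1 := le_local hp2
    have h2 : 1 / (N : ℝ) ≤ 1 / p := one_div_le_one_div_of_le (by linarith) hp'
    have h3 : lam * log p ≤ lam * log (N + 1) :=
      mul_le_mul_of_nonneg_left (log_le_log (by linarith) (by linarith)) hlam0.le
    linarith
  have hrad : ∑ p ∈ r.primeFactors, log (p : ℝ) ≤ log r := by
    rw [← log_prod (fun p hp => by exact_mod_cast (Nat.pos_of_mem_primeFactors hp).ne')]
    apply log_le_log
    · exact prod_pos fun p hp => by exact_mod_cast Nat.pos_of_mem_primeFactors hp
    · have h := Nat.le_of_dvd hr (Nat.prod_primeFactors_dvd r)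
      rw [← Nat.cast_prod]
      exact_mod_cast h
  have hsum : ∑ p ∈ r.primeFactors, (-log (1 - (p : ℝ)⁻¹) - lam * log p) ≤
      ∑ p ∈ N.primesLE, (-log (1 - (p : ℝ)⁻¹) - lam * log p) := by
    rw [← sum_filter_add_sum_filter_not r.primeFactors (fun p => p ≤ N)]
    have h1 : ∑ p ∈ r.primeFactors with ¬ p ≤ N, (-log (1 - (p : ℝ)⁻¹) - lam * log p) ≤ 0 :=
      sum_nonpos fun p hp => hbig p (by have := (mem_filter.1 hp).2; omega)
    have h2 : ∑ p ∈ r.primeFactors with p ≤ N, (-log (1 - (p : ℝ)⁻¹) - lam * log p) ≤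
        ∑ p ∈ N.primesLE, (-log (1 - (p : ℝ)⁻¹) - lam * log p) := by
      apply sum_le_sum_of_subset_of_nonneg
      · intro p hp
        rw [mem_filter] at hp
        exact Nat.mem_primesLE.2 ⟨hp.2, Nat.prime_of_mem_primeFactors hp.1⟩
      · intro p hp _
        exact hsmall p hp
    linarith
  rw [sum_sub_distrib, sum_sub_distrib, ← mul_sum, ← mul_sum] at hsum
  have h4 := mul_le_mul_of_nonneg_left hrad hlam0.le
  have e : (log r - ∑ p ∈ N.primesLE, log (p : ℝ)) / (N * log (N + 1)) =
      lam * log r - lam * ∑ p ∈ N.primesLE, log (p : ℝ) := by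
    rw [hlam]; ring
  rw [log_ratio_eq hr, e, logEulerProd]
  linarith

/-! ### Mertens-type upper bounds -/

lemma pow_dvd_factorial (p k : ℕ) (hp : 0 < p) : p ^ k ∣ (p * k).factorial := by
  induction k with
  | zero => simp
  | succ k ih =>
    rw [pow_succ, Nat.mul_succ]
    exact (mul_dvd_mul ih (Nat.dvd_factorial hp le_rfl)).trans
      (Nat.factorial_mul_factorial_dvd_factorial_add _ _)

lemma prod_pow_dvd_factorial (N : ℕ) : ∏ p ∈ N.primesLE, p ^ (N / p) ∣ N.factorial := by
  apply Finset.prod_dvd_of_isRelPrime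
  · intro p hp q hq hpq
    have := (Nat.coprime_primes (Nat.prime_of_mem_primesLE hp)
      (Nat.prime_of_mem_primesLE hq)).2 hpq
    exact Nat.coprime_iff_isRelPrime.1 (Nat.Coprime.pow _ _ this)
  · intro p hp
    exact (pow_dvd_factorial p (N / p) (Nat.prime_of_mem_primesLE hp).pos).trans
      (Nat.factorial_dvd_factorial (Nat.mul_div_le N p))

/-- A weak Stirling upper bound `N! ≤ e N (N / e) ^ N`. -/
lemma log_factorial_le {N : ℕ} (hN : 1 ≤ N) :
    log (N.factorial : ℝ) ≤ N * log N - N + log N + 1 := by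
  induction N, hN using Nat.le_induction with
  | base => simp
  | succ n hn ih =>
    have hn' : (1 : ℝ) ≤ n := by exact_mod_cast hn
    have hf : (n.factorial : ℝ) ≠ 0 := by exact_mod_cast n.factorial_ne_zero
    rw [Nat.factorial_succ]
    push_cast
    rw [log_mul (by positivity) hf]
    -- the step is `1 ≤ (n + 1) * log (1 + 1/n)`
    have h := one_sub_inv_le_log_of_pos (x := ((n : ℝ) + 1) / n) (by positivity)
    rw [log_div (by positivity) (by positivity), inv_div] at h
    have e : 1 - (n : ℝ) / (n + 1) = 1 / (n + 1) := by field_simp; ring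
    rw [e, div_le_iff₀ (by positivity)] at h
    nlinarith

lemma log_lower {a b k : ℕ} (hk : 0 < k) (h : 2 ^ b ≤ a ^ k) :
    (b : ℝ) / k * log 2 ≤ log a := by
  have hk' : (0 : ℝ) < k := by exact_mod_cast hk
  have h1 : ((2 : ℝ)) ^ b ≤ (a : ℝ) ^ k := by exact_mod_cast h
  have h2 := log_le_log (by positivity) h1
  rw [log_pow, log_pow] at h2
  rw [div_mul_eq_mul_div, div_le_iff₀ hk']
  linarith

lemma log_four : log (4 : ℝ) = 2 * log 2 := by
  rw [show (4 : ℝ) = 2 ^ 2 by norm_num, log_pow]; norm_num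

lemma log_sixtyfour : log (64 : ℝ) = 6 * log 2 := by
  rw [show (64 : ℝ) = 2 ^ 6 by norm_num, log_pow]; norm_num

/-- The constant `0.47` exceeds `log 4 - 1 + (log N + 1) / N` for all `N ≥ 64`. -/
lemma mertensSum_le {N : ℕ} (hN : 64 ≤ N) : mertensSum N ≤ log N + 0.47 := by
  have hN' : (64 : ℝ) ≤ N := by exact_mod_cast hN
  have hN0 : (0 : ℝ) < N := by linarith
  have hθ : ∑ p ∈ N.primesLE, log (p : ℝ) ≤ log 4 * N := by
    have := Chebyshev.theta_le_log4_mul_x (x := N) hN0.le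
    rwa [Chebyshev.theta_eq_sum_primesLE_log] at this
  have hprod : ∑ p ∈ N.primesLE, ((N / p : ℕ) : ℝ) * log p ≤ log (N.factorial : ℝ) := by
    have h1 : ((∏ p ∈ N.primesLE, p ^ (N / p) : ℕ) : ℝ) ≤ N.factorial := by
      exact_mod_cast Nat.le_of_dvd N.factorial_pos (prod_pow_dvd_factorial N)
    have hpos : 0 < ∏ p ∈ N.primesLE, p ^ (N / p) :=
      prod_pos fun p hp => pow_pos (Nat.prime_of_mem_primesLE hp).pos _
    have h2 := log_le_log (by exact_mod_cast hpos) h1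
    push_cast at h2
    rw [log_prod] at h2
    · simpa only [log_pow] using h2
    · intro p hp
      have : (p : ℝ) ≠ 0 := by exact_mod_cast (Nat.prime_of_mem_primesLE hp).ne_zero
      positivity
  have hfloor : N * mertensSum N - ∑ p ∈ N.primesLE, log (p : ℝ) ≤
      ∑ p ∈ N.primesLE, ((N / p : ℕ) : ℝ) * log p := by
    rw [mertensSum, mul_sum, ← sum_sub_distrib]
    apply sum_le_sum
    intro p hp
    have hp0 : (2 : ℝ) ≤ p := by exact_mod_cast Nat.two_le_of_mem_primesLE hp
    have hlog : 0 ≤ log (p : ℝ) := log_nonneg (by linarith)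
    have h1 : (N : ℝ) / p < ((N / p : ℕ) : ℝ) + 1 := by
      rw [← Nat.floor_div_eq_div (K := ℝ)]
      exact Nat.lt_floor_add_one _
    have h2 := mul_le_mul_of_nonneg_right h1.le hlog
    have e : (N : ℝ) * (log p / p) = N / p * log p := by ring
    rw [e]
    linarith
  have hfac := log_factorial_le (N := N) (by omega)
  have hlogN : log (N : ℝ) ≤ 6 * log 2 + N / 64 - 1 := by
    have h := log_le_sub_one_of_pos (x := (N : ℝ) / 64) (by positivity)
    rw [log_div hN0.ne' (by norm_num), log_sixtyfour] at h
    linarith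
  have hl2 := log_two_lt_d9
  rw [log_four] at hθ
  have key : N * mertensSum N ≤ N * (log N + 0.47) := by nlinarith
  exact le_of_mul_le_mul_left key hN0

lemma sum_primesLE_succ (f : ℕ → ℝ) (n : ℕ) :
    ∑ p ∈ (n + 1).primesLE, f p =
      ∑ p ∈ n.primesLE, f p + if (n + 1).Prime then f (n + 1) else 0 := by
  rw [Nat.primesLE_eq_filter_range, Nat.primesLE_eq_filter_range, sum_filter, sum_range_succ,
    sum_filter]

/-- Summation by parts: with `D(N) = log N + 0.47 - mertensSum N ≥ 0`, the quantity
`logEulerProd N + D(N) / log N + 1/N - log (log N)` is nonincreasing for `N ≥ 64`. The summand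
`1/N` absorbs the telescoping difference between `1/(p-1)` and `1/p`. -/
lemma logEulerProd_induction {N : ℕ} (hN : 64 ≤ N) :
    logEulerProd N + (log N + 0.47 - mertensSum N) / log N + 1 / N - log (log N) ≤
      logEulerProd 64 + (log 64 + 0.47 - mertensSum 64) / log 64 + 1 / 64 - log (log 64) := by
  induction N, hN using Nat.le_induction with
  | base => norm_num
  | succ n hn ih =>
    refine le_trans ?_ ih
    have hn' : (64 : ℝ) ≤ n := by exact_mod_cast hn
    have hl : 0 < log (n : ℝ) := log_pos (by linarith)
    have hll : log (n : ℝ) ≤ log ((n : ℝ) + 1) := log_le_log (by linarith) (by linarith)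
    have hl1 : 0 < log ((n : ℝ) + 1) := by linarith
    have hD : 0 ≤ log n + 0.47 - mertensSum n := by linarith [mertensSum_le hn]
    have hD2 : (log n + 0.47 - mertensSum n) / log ((n : ℝ) + 1) ≤
        (log n + 0.47 - mertensSum n) / log n := div_le_div_of_nonneg_left hD hl hll
    -- `1 - x ≤ -log x` at `x = log n / log (n + 1)`
    have hloglog : (log ((n : ℝ) + 1) - log n) / log ((n : ℝ) + 1) ≤
        log (log ((n : ℝ) + 1)) - log (log n) := by
      have h := log_le_sub_one_of_pos (x := log (n : ℝ) / log ((n : ℝ) + 1)) (by positivity)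
      rw [log_div hl.ne' hl1.ne'] at h
      rw [sub_div, div_self hl1.ne']
      linarith
    have hinv : 1 / ((n : ℝ) + 1) ≤ 1 / n := one_div_le_one_div_of_le (by linarith) (by linarith)
    rw [logEulerProd, mertensSum, sum_primesLE_succ (fun p => -log (1 - (p : ℝ)⁻¹)),
      sum_primesLE_succ (fun p => log (p : ℝ) / p), ← logEulerProd, ← mertensSum]
    push_cast
    by_cases hp : (n + 1).Prime
    · simp only [hp, if_true]
      have hloc := local_le (p := n + 1) (by omega)
      push_cast at hloc
      rw [add_sub_cancel_right] at hloc
      have e : (log ((n : ℝ) + 1) + 0.47 - (mertensSum n + log ((n : ℝ) + 1) / (n + 1))) /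
          log ((n : ℝ) + 1) = (log n + 0.47 - mertensSum n) / log ((n : ℝ) + 1) +
          (log ((n : ℝ) + 1) - log n) / log ((n : ℝ) + 1) - 1 / (n + 1) := by
        field_simp
        ring
      rw [e]
      linarith
    · simp only [hp, if_false, add_zero]
      have e : (log ((n : ℝ) + 1) + 0.47 - mertensSum n) /
          log ((n : ℝ) + 1) = (log n + 0.47 - mertensSum n) / log ((n : ℝ) + 1) +
          (log ((n : ℝ) + 1) - log n) / log ((n : ℝ) + 1) := by
        field_simp
        ring
      rw [e]
      linarith

/-! ### Numerical values -/

lemma primesLE_ten : Nat.primesLE 10 = {2, 3, 5, 7} := by decide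

lemma primesLE_twentyeight : Nat.primesLE 28 = {2, 3, 5, 7, 11, 13, 17, 19, 23} := by decide

lemma primesLE_sixtyfour : Nat.primesLE 64 =
    {2, 3, 5, 7, 11, 13, 17, 19, 23, 29, 31, 37, 41, 43, 47, 53, 59, 61} := by
  decide +kernel

lemma logEulerProd_eq (N : ℕ) :
    logEulerProd N = log (∏ p ∈ N.primesLE, (1 - (p : ℝ)⁻¹)⁻¹) := by
  rw [log_prod, logEulerProd]
  · simp [log_inv]
  · intro p hp
    have h2 : (2 : ℝ) ≤ p := by exact_mod_cast Nat.two_le_of_mem_primesLE hp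
    have : (p : ℝ)⁻¹ < 1 := inv_lt_one_of_one_lt₀ (by linarith)
    exact inv_ne_zero (by linarith)

lemma logEulerProd_ten : logEulerProd 10 = log (35 / 8) := by
  rw [logEulerProd_eq, primesLE_ten]
  norm_num

lemma logEulerProd_twentyeight : logEulerProd 28 ≤ log 6.12 := by
  rw [logEulerProd_eq, primesLE_twentyeight]
  apply log_le_log
  · norm_num
  · norm_num

lemma logEulerProd_sixtyfour : logEulerProd 64 ≤ log 7.6 := by
  rw [logEulerProd_eq, primesLE_sixtyfour]
  apply log_le_log
  · norm_num
  · norm_num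

lemma theta_eq_log_prod (N : ℕ) :
    ∑ p ∈ N.primesLE, log (p : ℝ) = log ((∏ p ∈ N.primesLE, p : ℕ) : ℝ) := by
  push_cast
  rw [log_prod]
  intro p hp
  exact_mod_cast (Nat.prime_of_mem_primesLE hp).ne_zero

lemma mertensSum_sixtyfour : 2.8 ≤ mertensSum 64 := by
  -- each `log p` is rounded down to a multiple of `(log 2) / 4`
  have h : ∑ p ∈ Nat.primesLE 64, (Nat.log 2 (p ^ 4) : ℝ) / 4 / p * log 2 ≤ mertensSum 64 := by
    apply sum_le_sum
    intro p hp
    have hp0 := (Nat.prime_of_mem_primesLE hp).ne_zero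
    have hlog := log_lower (a := p) (b := Nat.log 2 (p ^ 4)) (k := 4) (by norm_num)
      (Nat.pow_log_le_self 2 (pow_ne_zero 4 hp0))
    rw [div_mul_eq_mul_div]
    exact div_le_div_of_nonneg_right (by exact_mod_cast hlog) (Nat.cast_nonneg p)
  rw [← sum_mul, primesLE_sixtyfour] at h
  norm_num at h
  linarith [log_two_gt_d9]

/-! ### The three ranges of `log r` -/

lemma bound_large {r : ℕ} (hr : 0 < r) (hL : 64 ≤ log (r : ℝ)) :
    log ((r : ℝ) / r.totient) < log (4 * log (log r)) := by
  set L := log (r : ℝ) with hLdef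
  set N := ⌊L⌋₊ with hNdef
  have hN : 64 ≤ N := Nat.le_floor (by exact_mod_cast hL)
  have hN' : (64 : ℝ) ≤ N := by exact_mod_cast hN
  have hNL : (N : ℝ) ≤ L := Nat.floor_le (by linarith)
  have hLN : L < N + 1 := Nat.lt_floor_add_one L
  have h1 := log_ratio_le hr (N := N) (by omega)
  have h2 := logEulerProd_induction hN
  have hl2 := log_two_gt_d9
  have hl2' := log_two_lt_d9
  have hlogN : 6 * log 2 ≤ log (N : ℝ) := by
    rw [← log_sixtyfour]; exact log_le_log (by norm_num) hN'
  have hlogN1 : 6 * log 2 ≤ log ((N : ℝ) + 1) := by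
    rw [← log_sixtyfour]; exact log_le_log (by norm_num) (by linarith)
  have hD : 0 ≤ (log N + 0.47 - mertensSum N) / log N :=
    div_nonneg (by linarith [mertensSum_le hN]) (by linarith)
  have hθ : 0 ≤ ∑ p ∈ N.primesLE, log (p : ℝ) := sum_nonneg fun p _ => log_natCast_nonneg p
  have htail : (L - ∑ p ∈ N.primesLE, log (p : ℝ)) / (N * log (N + 1)) ≤ 0.246 := by
    rw [div_le_iff₀ (by nlinarith)]
    nlinarith
  have hinv : (0 : ℝ) ≤ 1 / N := by positivity
  have hD64 : (log 64 + 0.47 - mertensSum 64) / log 64 ≤ 0.45 := by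
    rw [log_sixtyfour, div_le_iff₀ (by linarith)]
    linarith [mertensSum_sixtyfour]
  -- `log x ≤ log (1/2) + (2x - 1)` at `x = 7.6 / (4 log 64)`
  have hC : log 7.6 - log (log 64) - log 4 ≤ -0.77 := by
    have h64 : (0 : ℝ) < log 64 := by rw [log_sixtyfour]; linarith
    have h := log_le_sub_one_of_pos (x := 3.8 / log 64) (by positivity)
    rw [log_div (by norm_num) h64.ne', show (3.8 : ℝ) = 7.6 / 2 by norm_num,
      log_div (by norm_num) (by norm_num)] at h
    have h' : (7.6 : ℝ) / 2 / log 64 ≤ 0.92 := by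
      rw [div_le_iff₀ h64, log_sixtyfour]; linarith
    rw [log_four]
    linarith
  have hmono : log (log (N : ℝ)) ≤ log (log L) :=
    log_le_log (by linarith) (log_le_log (by linarith) hNL)
  have hLL : 0 < log L := log_pos (by linarith)
  rw [log_mul (by norm_num) hLL.ne']
  linarith [logEulerProd_sixtyfour]

lemma bound_of_exp {r : ℕ} {P t E : ℝ} (hP : 0 < P) (h1 : log ((r : ℝ) / r.totient) ≤ log P + t)
    (hE : exp t ≤ E) (h : P * E < 4 * log (log r)) :
    log ((r : ℝ) / r.totient) < log (4 * log (log r)) := by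
  have hE0 : 0 < E := (exp_pos t).trans_le hE
  have h2 : t ≤ log E := (le_log_iff_exp_le hE0).2 hE
  have h3 : log (P * E) < log (4 * log (log r)) := log_lt_log (by positivity) h
  rw [log_mul hP.ne' hE0.ne'] at h3
  linarith

lemma exp_half_le : exp (1 / 2) ≤ 1.65 := by
  have h := exp_one_lt_d9
  have e : exp (1 / 2) * exp (1 / 2) = exp 1 := by rw [← exp_add]; norm_num
  nlinarith [exp_pos (1 / 2)]

lemma bound_medium {r : ℕ} (hr : 0 < r) (hL : 16 ≤ log (r : ℝ)) (hL' : log (r : ℝ) ≤ 64) :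
    log ((r : ℝ) / r.totient) < log (4 * log (log r)) := by
  have h1 := log_ratio_le hr (N := 28) (by norm_num)
  have hl2 := log_two_gt_d9
  rw [theta_eq_log_prod, primesLE_twentyeight] at h1
  have hθ := log_lower (a := 223092870) (b := 27) (k := 1) (by norm_num)
    (by norm_num)
  have h29 := log_lower (a := 29) (b := 24) (k := 5) (by norm_num) (by norm_num)
  norm_num at h1 hθ h29
  refine bound_of_exp (P := 6.12) (t := 1 / 2) (by norm_num) ?_ exp_half_le ?_
  · refine h1.trans (add_le_add logEulerProd_twentyeight ?_)
    rw [div_le_iff₀ (by linarith)]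
    linarith
  · have h16 : log (16 : ℝ) = 4 * log 2 := by
      rw [show (16 : ℝ) = 2 ^ 4 by norm_num, log_pow]; norm_num
    have := log_le_log (by norm_num) hL
    linarith

lemma bound_small {r : ℕ} (hr : 19 ≤ r) (hL' : log (r : ℝ) ≤ 16) :
    log ((r : ℝ) / r.totient) < log (4 * log (log r)) := by
  have h1 := log_ratio_le (r := r) (by omega) (N := 10) (by norm_num)
  have hl2 := log_two_gt_d9
  have hl2' := log_two_lt_d9
  rw [theta_eq_log_prod, primesLE_ten, logEulerProd_ten] at h1
  have hθ := log_lower (a := 210) (b := 15) (k := 2) (by norm_num) (by norm_num)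
  have h11 := log_lower (a := 11) (b := 10) (k := 3) (by norm_num) (by norm_num)
  have h11' : log (11 : ℝ) ≤ 4 * log 2 := by
    have := log_le_log (x := 11) (y := 2 ^ 4) (by norm_num) (by norm_num)
    rw [log_pow] at this
    exact_mod_cast this
  have h19 := log_lower (a := 19) (b := 21) (k := 5) (by norm_num) (by norm_num)
  have hrL : log (19 : ℝ) ≤ log r := log_le_log (by norm_num) (by exact_mod_cast hr)
  norm_num at h1 hθ h11 h19
  rcases le_total (log (r : ℝ)) 4 with h4 | h4
  · refine bound_of_exp (P := 35 / 8) (t := -0.04) (E := 1 / 1.04) (by norm_num) ?_ ?_ ?_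
    · refine h1.trans (add_le_add le_rfl ?_)
      rw [div_le_iff₀ (by linarith)]
      linarith
    · rw [exp_neg, one_div]
      exact inv_anti₀ (by norm_num) (by linarith [add_one_le_exp (0.04 : ℝ)])
    · -- `log x ≥ 2 - e / x`
      have hx : (2.91 : ℝ) ≤ log r := by linarith
      have h := one_sub_inv_le_log_of_pos (x := log (r : ℝ) / exp 1) (by positivity)
      rw [log_div (by linarith) (exp_pos 1).ne', log_exp, inv_div] at h
      have h' : exp 1 / log (r : ℝ) ≤ 0.935 := by
        rw [div_le_iff₀ (by linarith)]
        linarith [exp_one_lt_d9]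
      norm_num at *
      linarith
  rcases le_total (log (r : ℝ)) 8 with h8 | h8
  · refine bound_of_exp (P := 35 / 8) (t := 0.15) (E := 1 / 0.85) (by norm_num) ?_ ?_ ?_
    · refine h1.trans (add_le_add le_rfl ?_)
      rw [div_le_iff₀ (by linarith)]
      linarith
    · rw [show (0.15 : ℝ) = -(-0.15) by norm_num, exp_neg, one_div]
      exact inv_anti₀ (by norm_num) (by linarith [add_one_le_exp (-0.15 : ℝ)])
    · have := log_le_log (by norm_num) h4
      rw [log_four] at this
      norm_num at *
      linarith
  · refine bound_of_exp (P := 35 / 8) (t := 1 / 2) (by norm_num) ?_ exp_half_le ?_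
    · refine h1.trans (add_le_add le_rfl ?_)
      rw [div_le_iff₀ (by linarith)]
      linarith
    · have h8' : log (8 : ℝ) = 3 * log 2 := by
        rw [show (8 : ℝ) = 2 ^ 3 by norm_num, log_pow]; norm_num
      have := log_le_log (by norm_num) h8
      linarith

end TotientRatio

/-- For `r ≥ 19`, `φ(r)/r > 1/(4·log log r)`. -/
theorem totient_ratio_lower_bound (r : ℕ) (hr : 19 ≤ r) :
    1 / (4 * Real.log (Real.log r)) < (r.totient : ℝ) / (r : ℝ) := by
  have hr0 : (0 : ℝ) < r := by exact_mod_cast (by omega : 0 < r)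
  have hφ : (0 : ℝ) < r.totient := by exact_mod_cast Nat.totient_pos.2 (by omega)
  have key : Real.log ((r : ℝ) / r.totient) < Real.log (4 * Real.log (Real.log r)) := by
    rcases le_total (Real.log (r : ℝ)) 16 with h | h
    · exact TotientRatio.bound_small hr h
    rcases le_total (Real.log (r : ℝ)) 64 with h' | h'
    · exact TotientRatio.bound_medium (by omega) h h'
    · exact TotientRatio.bound_large (by omega) h'
  -- positivity of `log (log r)`, without which `key` would speak of `log |x|`
  have hLL : 0 < Real.log (Real.log r) := by
    apply Real.log_pos
    have h19 := TotientRatio.log_lower (a := 19) (b := 4) (k := 1) (by norm_num)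
      (by norm_num)
    have hrL : Real.log (19 : ℝ) ≤ Real.log r :=
      Real.log_le_log (by norm_num) (by exact_mod_cast hr)
    norm_num at h19
    linarith [Real.log_two_gt_d9]
  have h := (Real.log_lt_log_iff (by positivity) (by positivity)).1 key
  rw [← inv_div (r : ℝ), one_div]
  exact inv_strictAnti₀ (by positivity) h
end

section
/- Let N > 1 and y be natural numbers with gcd(y, N) = 1, and let r be the multiplicative order of y modulo N. If r is even, then gcd(N, y^(r/2) + 1) > 1; if in addition N does not divide y^(r/2) + 1, then gcd(N, y^(r/2) + 1) is a nontrivial factor of N, i.e. 1 < gcd(N, y^(r/2) + 1) < N. -/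
/-! Write `r = 2k`. In `ZMod N` one has `(y^k + 1)(y^k - 1) = y^r - 1 = 0`. If `y^k + 1` were
coprime to `N` it would be a unit, forcing `y^k = 1` with `0 < k < r`, against the minimality of
the order. The upper bound holds because the gcd divides `N`, with equality only if
`N ∣ y^k + 1`. -/

/-- Reduction of factoring to order finding: if `gcd(y,N) = 1` and the multiplicative
order `r` of `y` mod `N` is even, then `gcd(N, y^(r/2) + 1) > 1`; if moreover
`N ∤ y^(r/2) + 1`, then `gcd(N, y^(r/2) + 1)` is a nontrivial factor of `N`. -/
theorem factor_from_order (N y : ℕ) (hN : 1 < N) (hgcd : Nat.gcd y N = 1)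
    (r : ℕ) (hr : r = orderOf (y : ZMod N)) (hreven : Even r) :
    1 < Nat.gcd N (y ^ (r / 2) + 1) ∧
      (¬ N ∣ y ^ (r / 2) + 1 → Nat.gcd N (y ^ (r / 2) + 1) < N) := by
  have hN0 : 0 < N := by omega
  constructor
  · have : NeZero N := ⟨by omega⟩
    -- `orderOf` would be `0` for an element of infinite order; a unit of a finite ring has none.
    have hpos : 0 < r := by
      rw [hr, ← ZMod.coe_unitOfCoprime y hgcd, orderOf_units]
      exact orderOf_pos _
    obtain ⟨k, hk⟩ := hreven
    have hk2 : r / 2 = k := by omega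
    rw [hk2]
    by_contra hle
    have hg : Nat.gcd N (y ^ k + 1) = 1 := by
      have := Nat.gcd_pos_of_pos_left (y ^ k + 1) hN0
      omega
    have hunit : IsUnit ((y : ZMod N) ^ k + 1) := by
      have h := (ZMod.isUnit_iff_coprime (y ^ k + 1) N).2 (Nat.Coprime.symm hg)
      exact_mod_cast h
    have hpow : (y : ZMod N) ^ k * (y : ZMod N) ^ k = 1 := by
      rw [← pow_add, ← hk, hr, pow_orderOf_eq_one]
    have hmul : ((y : ZMod N) ^ k + 1) * ((y : ZMod N) ^ k - 1) = 0 := by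
      linear_combination hpow
    have hone : (y : ZMod N) ^ k = 1 := sub_eq_zero.1 (hunit.mul_right_eq_zero.1 hmul)
    have := orderOf_le_of_pow_eq_one (by omega) hone
    omega
  · intro hnd
    refine lt_of_le_of_ne (Nat.gcd_le_left _ hN0) fun h => hnd ?_
    exact Nat.gcd_eq_left_iff_dvd.1 h
end
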